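/- (Equation (3) in the proof of Theorem 3: bounded differences.) Let G be a learning algorithm with function stability Δ̄ with respect to removal of a sample, let the point-wise cost c_τ be τ-smooth, and assume 0 ≤ ℓ_τ(G_S, z, k) ≤ γ. Then the map S ↦ R(G_S) − R_e(G_S) has bounded differences: for every training set S of size m, every index i, and every replacement sample ẑ_i, |[R(G_S) − R_e(G_S)] − [R(G_{S^i}) − R_e(G_{S^i})]| ≤ ((4m−2)τΔ̄ + γ)/m. -/

import Mathlib

open MeasureTheory
open scoped BigOperators

/-- The sample-wise loss `L(gS, z) = ∑_{k} c(gS(x,k), y_(k))` of a prediction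
function `gS` on a sample `z = (x, y)` of structure complexity `n`. -/
noncomputable def sampleLoss {X : Type*} {n : ℕ} (c : ℝ → ℝ → ℝ)
    (gS : X → Fin n → ℝ) (z : X × (Fin n → ℝ)) : ℝ :=
  ∑ k, c (gS z.1 k) (z.2 k)

/-- The generalization risk `R(gS) = E_{z∼D}[(1/n) L(gS, z)]`. -/
noncomputable def genRisk {X : Type*} [MeasurableSpace X] {n : ℕ}
    (D : Measure (X × (Fin n → ℝ))) (c : ℝ → ℝ → ℝ)
    (gS : X → Fin n → ℝ) : ℝ :=
  ∫ z, (1 / (n : ℝ)) * sampleLoss c gS z ∂D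

/-- The empirical risk `R_e(gS) = (1/(m n)) ∑_{i=1}^m L(gS, z_i)` of a
prediction function `gS` on a training set `S` of size `m`. -/
noncomputable def empRisk {X : Type*} {n m : ℕ} (c : ℝ → ℝ → ℝ)
    (gS : X → Fin n → ℝ) (S : Fin m → X × (Fin n → ℝ)) : ℝ :=
  (1 / ((m : ℝ) * n)) * ∑ i, sampleLoss c gS (S i)

/-!
Removal stability passes to replacement stability at twice the price: the predictors learned from
`S` and `S^i` are both `Δbar`-close to the predictor trained without the `i`-th sample. By
smoothness their point-wise losses on a common sample then differ by at most `2τΔbar`, and so do the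
two generalization risks. In the empirical risk the `m - 1` common samples contribute at most
`2τΔbar / m` each; the replaced sample is the only one for which smoothness says nothing, and it
contributes at most `γ / m`.
-/

theorem nonneg_of_forall_abs_sub_le_mul {f : ℝ → ℝ} {τ : ℝ}
    (hf : ∀ a b, |f a - f b| ≤ τ * |a - b|) : 0 ≤ τ := by
  simpa using (abs_nonneg _).trans (hf 1 0)

theorem abs_sum_le_card_sub_one_nsmul_add {ι M : Type*} [Fintype ι] [AddCommGroup M]
    [LinearOrder M] [IsOrderedAddMonoid M] {f : ι → M} {i : ι} {a b : M}
    (ha : ∀ j ≠ i, |f j| ≤ a) (hb : |f i| ≤ b) :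
    |∑ j, f j| ≤ (Fintype.card ι - 1) • a + b := by
  classical
  calc
    |∑ j, f j| ≤ ∑ j, |f j| := Finset.abs_sum_le_sum_abs _ _
    _ = ∑ j ∈ Finset.univ.erase i, |f j| + |f i| :=
      (Finset.sum_erase_add _ _ (Finset.mem_univ i)).symm
    _ ≤ (Finset.univ.erase i).card • a + b :=
      add_le_add (Finset.sum_le_card_nsmul _ _ _ fun j hj => ha j (Finset.ne_of_mem_erase hj)) hb
    _ = (Fintype.card ι - 1) • a + b := by
      rw [Finset.card_erase_of_mem (Finset.mem_univ i), Finset.card_univ]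

section Risk

variable {X : Type*} {n m : ℕ} {c : ℝ → ℝ → ℝ} {g g' : X → Fin n → ℝ} {ε : ℝ}

theorem abs_sampleLoss_sub_le {z z' : X × (Fin n → ℝ)}
    (h : ∀ k, |c (g z.1 k) (z.2 k) - c (g' z'.1 k) (z'.2 k)| ≤ ε) :
    |sampleLoss c g z - sampleLoss c g' z'| ≤ n * ε := by
  calc
    |sampleLoss c g z - sampleLoss c g' z'|
        = |∑ k, (c (g z.1 k) (z.2 k) - c (g' z'.1 k) (z'.2 k))| := by
      rw [sampleLoss, sampleLoss, Finset.sum_sub_distrib]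
    _ ≤ ∑ k, |c (g z.1 k) (z.2 k) - c (g' z'.1 k) (z'.2 k)| := Finset.abs_sum_le_sum_abs _ _
    _ ≤ ∑ _k : Fin n, ε := Finset.sum_le_sum fun k _ => h k
    _ = n * ε := by simp

theorem abs_genRisk_sub_le [MeasurableSpace X] {D : Measure (X × (Fin n → ℝ))}
    [IsProbabilityMeasure D] (hn : 0 < n) (hg : Integrable (sampleLoss c g) D)
    (hg' : Integrable (sampleLoss c g') D)
    (h : ∀ᵐ z ∂D, |sampleLoss c g z - sampleLoss c g' z| ≤ n * ε) :
    |genRisk D c g - genRisk D c g'| ≤ ε := by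
  have hn' : (0 : ℝ) < n := Nat.cast_pos.mpr hn
  have hloss : |∫ z, (sampleLoss c g z - sampleLoss c g' z) ∂D| ≤ n * ε := by
    simpa [Real.norm_eq_abs] using norm_integral_le_of_norm_le_const
      (f := fun z => sampleLoss c g z - sampleLoss c g' z) h
  calc
    |genRisk D c g - genRisk D c g'|
        = (1 / (n : ℝ)) * |∫ z, (sampleLoss c g z - sampleLoss c g' z) ∂D| := by
      rw [genRisk, genRisk, integral_const_mul, integral_const_mul, ← mul_sub, abs_mul,
        abs_of_pos (one_div_pos.mpr hn'), integral_sub hg hg']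
    _ ≤ (1 / (n : ℝ)) * (n * ε) := by gcongr
    _ = ε := by field_simp

theorem abs_empRisk_sub_le {S S' : Fin m → X × (Fin n → ℝ)} {i : Fin m} {γ : ℝ} (hn : 0 < n)
    (hne : ∀ j ≠ i, |sampleLoss c g (S j) - sampleLoss c g' (S' j)| ≤ n * ε)
    (hi : |sampleLoss c g (S i) - sampleLoss c g' (S' i)| ≤ n * γ) :
    |empRisk c g S - empRisk c g' S'| ≤ ((m - 1) * ε + γ) / m := by
  have hm : 0 < m := i.pos
  have hsum : |∑ j, (sampleLoss c g (S j) - sampleLoss c g' (S' j))|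
      ≤ (m - 1) * (n * ε) + n * γ := by
    simpa [Nat.cast_pred hm] using abs_sum_le_card_sub_one_nsmul_add hne hi
  calc
    |empRisk c g S - empRisk c g' S'|
        = (1 / ((m : ℝ) * n)) * |∑ j, (sampleLoss c g (S j) - sampleLoss c g' (S' j))| := by
      rw [empRisk, empRisk, ← mul_sub, ← Finset.sum_sub_distrib, abs_mul,
        abs_of_nonneg (by positivity : 0 ≤ 1 / ((m : ℝ) * n))]
    _ ≤ (1 / ((m : ℝ) * n)) * ((m - 1) * (n * ε) + n * γ) := by gcongr
    _ = ((m - 1) * ε + γ) / m := by field_simp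

theorem abs_genRisk_sub_empRisk_sub_le [MeasurableSpace X] (hn : 0 < n)
    {D : Measure (X × (Fin n → ℝ))} [IsProbabilityMeasure D]
    {S S' : Fin m → X × (Fin n → ℝ)} {i : Fin m} {τ δ γ : ℝ}
    (hS : ∀ j ≠ i, S' j = S j) (hg : ∀ x k, |g x k - g' x k| ≤ δ)
    (hc : ∀ y₁ y₂ y, |c y₁ y - c y₂ y| ≤ τ * |y₁ - y₂|)
    (hi : ∀ k, |c (g (S i).1 k) ((S i).2 k) - c (g' (S' i).1 k) ((S' i).2 k)| ≤ γ)
    (hint : Integrable (sampleLoss c g) D) (hint' : Integrable (sampleLoss c g') D) :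
    |(genRisk D c g - empRisk c g S) - (genRisk D c g' - empRisk c g' S')|
      ≤ ((2 * (m : ℝ) - 1) * (τ * δ) + γ) / m := by
  have hτ : 0 ≤ τ := nonneg_of_forall_abs_sub_le_mul fun a b => hc a b 0
  have hm : (m : ℝ) ≠ 0 := Nat.cast_ne_zero.mpr i.pos.ne'
  have hloss (z : X × (Fin n → ℝ)) : |sampleLoss c g z - sampleLoss c g' z| ≤ n * (τ * δ) :=
    abs_sampleLoss_sub_le fun k =>
      (hc _ _ _).trans (mul_le_mul_of_nonneg_left (hg z.1 k) hτ)
  have hgen : |genRisk D c g - genRisk D c g'| ≤ τ * δ :=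
    abs_genRisk_sub_le hn hint hint' (.of_forall hloss)
  have hemp : |empRisk c g S - empRisk c g' S'| ≤ ((m - 1) * (τ * δ) + γ) / m :=
    abs_empRisk_sub_le hn (fun j hj => hS j hj ▸ hloss (S j)) (abs_sampleLoss_sub_le hi)
  calc
    |(genRisk D c g - empRisk c g S) - (genRisk D c g' - empRisk c g' S')|
        = |(genRisk D c g - genRisk D c g') - (empRisk c g S - empRisk c g' S')| := by
      rw [sub_sub_sub_comm]
    _ ≤ |genRisk D c g - genRisk D c g'| + |empRisk c g S - empRisk c g' S'| := abs_sub _ _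
    _ ≤ τ * δ + ((m - 1) * (τ * δ) + γ) / m := add_le_add hgen hemp
    _ = ((2 * (m : ℝ) - 1) * (τ * δ) + γ) / m := by
      field_simp
      ring

theorem generalization_gap_bounded_differences_general [MeasurableSpace X] (hn : 0 < n)
    {D : Measure (X × (Fin n → ℝ))} [IsProbabilityMeasure D]
    {S S' : Fin m → X × (Fin n → ℝ)} {i : Fin m} {g₀ : X → Fin n → ℝ} {τ Δbar γ : ℝ}
    (hS : ∀ j ≠ i, S' j = S j)
    (hg : ∀ x k, |g x k - g₀ x k| ≤ Δbar) (hg' : ∀ x k, |g' x k - g₀ x k| ≤ Δbar)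
    (hc : ∀ y₁ y₂ y, |c y₁ y - c y₂ y| ≤ τ * |y₁ - y₂|)
    (hi : ∀ k, c (g (S i).1 k) ((S i).2 k) ∈ Set.Icc 0 γ)
    (hi' : ∀ k, c (g' (S' i).1 k) ((S' i).2 k) ∈ Set.Icc 0 γ)
    (hint : Integrable (sampleLoss c g) D) (hint' : Integrable (sampleLoss c g') D) :
    |(genRisk D c g - empRisk c g S) - (genRisk D c g' - empRisk c g' S')|
      ≤ ((4 * (m : ℝ) - 2) * τ * Δbar + γ) / m := by
  have hdist (x : X) (k : Fin n) : |g x k - g' x k| ≤ 2 * Δbar := by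
    calc
      |g x k - g' x k| ≤ |g x k - g₀ x k| + |g' x k - g₀ x k| := by
        simpa only [Real.dist_eq] using dist_triangle_right (g x k) (g' x k) (g₀ x k)
      _ ≤ Δbar + Δbar := add_le_add (hg x k) (hg' x k)
      _ = 2 * Δbar := (two_mul Δbar).symm
  have hreplaced (k : Fin n) :
      |c (g (S i).1 k) ((S i).2 k) - c (g' (S' i).1 k) ((S' i).2 k)| ≤ γ :=
    abs_sub_le_of_nonneg_of_le (hi k).1 (hi k).2 (hi' k).1 (hi' k).2
  calc
    |(genRisk D c g - empRisk c g S) - (genRisk D c g' - empRisk c g' S')|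
        ≤ ((2 * (m : ℝ) - 1) * (τ * (2 * Δbar)) + γ) / m :=
      abs_genRisk_sub_empRisk_sub_le hn hS hdist hc hreplaced hint hint'
    _ = ((4 * (m : ℝ) - 2) * τ * Δbar + γ) / m := by ring

end Risk

/-- **Equation (3) in the proof of Theorem 3 (bounded differences).**
If `G` has function stability `Δbar` with respect to removal of a sample, the
point-wise cost `cτ` is `τ`-smooth, and `0 ≤ ℓτ(G_S, z, k) ≤ γ`, then the map
`S ↦ R(G_S) − R_e(G_S)` has bounded differences: for every training set `S`
of size `m`, every index `i` and every replacement sample `ẑᵢ`,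
`|[R(G_S) − R_e(G_S)] − [R(G_{Sⁱ}) − R_e(G_{Sⁱ})]| ≤ ((4m−2)τΔbar + γ)/m`. -/
theorem generalization_gap_bounded_differences
    {X : Type*} [MeasurableSpace X] {n m : ℕ} (hn : 0 < n) (hm : 0 < m)
    (D : Measure (X × (Fin n → ℝ))) [IsProbabilityMeasure D]
    (G : (Fin m → X × (Fin n → ℝ)) → X → Fin n → ℝ)
    (Gminus : (Fin m → X × (Fin n → ℝ)) → Fin m → X → Fin n → ℝ)
    (cτ : ℝ → ℝ → ℝ) (τ Δbar : ℝ)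
    (hGminus : ∀ (S : Fin m → X × (Fin n → ℝ)) (i : Fin m) (z : X × (Fin n → ℝ)),
      Gminus (Function.update S i z) i = Gminus S i)
    (hstab : ∀ (S : Fin m → X × (Fin n → ℝ)) (i : Fin m) (x : X) (k : Fin n),
      |G S x k - Gminus S i x k| ≤ Δbar)
    (hsmooth : ∀ y₁ y₂ ystar : ℝ, |cτ y₁ ystar - cτ y₂ ystar| ≤ τ * |y₁ - y₂|)
    (γ : ℝ)
    (hbound : ∀ (S : Fin m → X × (Fin n → ℝ)) (z : X × (Fin n → ℝ)) (k : Fin n),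
      0 ≤ cτ (G S z.1 k) (z.2 k) ∧ cτ (G S z.1 k) (z.2 k) ≤ γ)
    (hIntG : ∀ S : Fin m → X × (Fin n → ℝ),
      Integrable (fun z => sampleLoss cτ (G S) z) D)
    (hIntGm : ∀ (S : Fin m → X × (Fin n → ℝ)) (i : Fin m),
      Integrable (fun z => sampleLoss cτ (Gminus S i) z) D)
 :
    ∀ (S : Fin m → X × (Fin n → ℝ)) (i : Fin m) (zhat : X × (Fin n → ℝ)),
      |(genRisk D cτ (G S) - empRisk cτ (G S) S)
        - (genRisk D cτ (G (Function.update S i zhat))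
            - empRisk cτ (G (Function.update S i zhat)) (Function.update S i zhat))|
        ≤ ((4 * (m : ℝ) - 2) * τ * Δbar + γ) / (m : ℝ) := by
  intro S i zhat
  have hstab' : ∀ x k, |G (Function.update S i zhat) x k - Gminus S i x k| ≤ Δbar :=
    hGminus S i zhat ▸ hstab (Function.update S i zhat) i
  exact generalization_gap_bounded_differences_general hn
    (fun j hj => Function.update_of_ne hj zhat S) (hstab S i) hstab' hsmooth
    (hbound _ _) (hbound _ _) (hIntG _) (hIntG _)
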